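/- Let (C(k), δ, σ, τ) be a cocyclic system of R-modules over a commutative ring R, and for each k let Δ_k := Σ_{j=1}^{k+1} (−1)^{k(j−1)} σ_{k,k+1−j} ∘ τ_{k+1}^j : C(k+1) → C(k) be the (sign-stripped) chain-level BV operator. Then for every k ∈ ℕ and every normalized element x ∈ N(k+2) = ⋂_{0≤i≤k+1} ker(σ_{k+1,i}), the element Δ_k(Δ_{k+1}(x)) lies in the degenerate submodule D(k) ⊆ C(k). -/

import Mathlib

universe u v

variable {R : Type u} [CommRing R] (C : ℕ → Type v)
  [∀ k, AddCommGroup (C k)] [∀ k, Module R (C k)]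

/-- The degenerate submodule `D(k) = Σ_{0 ≤ i ≤ k−1} range (δ_{k,i}) ⊆ C(k)` of a cosimplicial
system of `R`-modules (with `D(0) = 0`).  Here `d m i : C(m) → C(m+1)` denotes the coface map
`δ_{m+1,i}`. -/
def degenerateSubmodule (d : ∀ k : ℕ, ℕ → (C k →ₗ[R] C (k + 1))) : ∀ k : ℕ, Submodule R (C k)
  | 0 => ⊥
  | m + 1 => ⨆ i ∈ Finset.range (m + 1), LinearMap.range (d m i)

/-- The normalized submodule `N(k) = ⋂_{0 ≤ i ≤ k−1} ker (σ_{k−1,i}) ⊆ C(k)` of a cosimplicial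
system of `R`-modules (with `N(0) = C(0)`).  Here `s m i : C(m+1) → C(m)` denotes the
codegeneracy map `σ_{m,i}`. -/
def normalizedSubmodule (s : ∀ k : ℕ, ℕ → (C (k + 1) →ₗ[R] C k)) : ∀ k : ℕ, Submodule R (C k)
  | 0 => ⊤
  | m + 1 => ⨅ i ∈ Finset.range (m + 1), LinearMap.ker (s m i)

/-- The (sign-stripped) chain-level BV operator
`Δ_k := Σ_{j=1}^{k+1} (−1)^{k(j−1)} σ_{k,k+1−j} ∘ τ_{k+1}^j : C(k+1) → C(k)` of a cocyclic
system of `R`-modules. -/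
def bvOperator (s : ∀ k : ℕ, ℕ → (C (k + 1) →ₗ[R] C k)) (τ : ∀ k : ℕ, Module.End R (C k))
    (k : ℕ) : C (k + 1) →ₗ[R] C k :=
  ∑ j ∈ Finset.Icc 1 (k + 1),
    ((-1 : ℤ) ^ (k * (j - 1))) • (s k (k + 1 - j)).comp (τ (k + 1) ^ j)

/-!
Write `e m = σ_{m,m} ∘ τ_{m+1}`. Moving rotations past codegeneracies turns the BV operator into
`Δ_m = Σ_{i ≤ m} (-1)^{m i} τ_m^i ∘ e m`, while
`e k ∘ τ_{k+1}^i ∘ e (k+1) = τ_k^i ∘ e k ∘ σ_{k+1,i}` for `0 ≤ i ≤ k + 1`. The right-hand side kills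
normalized elements, so there `e k ∘ Δ_{k+1}`, and with it `Δ_k ∘ Δ_{k+1}`, vanishes on the nose.
-/

section BVOperator

variable {C}
variable {s : ∀ k : ℕ, ℕ → (C (k + 1) →ₗ[R] C k)} {τ : ∀ k : ℕ, Module.End R (C k)}

/-- The extra codegeneracy `σ_{m,m} ∘ τ_{m+1} : C(m+1) → C(m)`, which behaves like a codegeneracy
in position `-1`; the BV operator is its alternating sum over rotations. -/
def extraCodegeneracy (s : ∀ k : ℕ, ℕ → (C (k + 1) →ₗ[R] C k)) (τ : ∀ k : ℕ, Module.End R (C k))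
    (m : ℕ) : C (m + 1) →ₗ[R] C m :=
  s m m ∘ₗ τ (m + 1)

theorem mem_normalizedSubmodule_succ {m : ℕ} {x : C (m + 1)} :
    x ∈ normalizedSubmodule C s (m + 1) ↔ ∀ i ≤ m, s m i x = 0 := by
  simp [normalizedSubmodule]

theorem codegeneracy_comp_rotation_pow {m : ℕ}
    (hτσ : ∀ i, i + 1 ≤ m → τ m ∘ₗ s m (i + 1) = s m i ∘ₗ τ (m + 1))
    {i j : ℕ} (hij : i + j ≤ m) :
    s m i ∘ₗ τ (m + 1) ^ j = (τ m ^ j) ∘ₗ s m (i + j) := by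
  induction j with
  | zero => rfl
  | succ j ih =>
    calc s m i ∘ₗ τ (m + 1) ^ (j + 1)
        = (s m i ∘ₗ τ (m + 1) ^ j) ∘ₗ τ (m + 1) := by rw [pow_succ]; rfl
      _ = (τ m ^ j) ∘ₗ s m (i + j) ∘ₗ τ (m + 1) := by rw [ih (by omega), LinearMap.comp_assoc]
      _ = (τ m ^ j) ∘ₗ τ m ∘ₗ s m (i + j + 1) := by rw [hτσ (i + j) hij]
      _ = (τ m ^ (j + 1)) ∘ₗ s m (i + (j + 1)) := by rw [pow_succ]; rfl

theorem extraCodegeneracy_comp_rotation_pow_succ {m : ℕ}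
    (hτσ₀ : τ m ∘ₗ s m 0 = s m m ∘ₗ τ (m + 1) ^ 2)
    (hτσ : ∀ i, i + 1 ≤ m → τ m ∘ₗ s m (i + 1) = s m i ∘ₗ τ (m + 1))
    {i : ℕ} (hi : i ≤ m) :
    extraCodegeneracy s τ m ∘ₗ τ (m + 1) ^ (i + 1) = (τ m ^ (i + 1)) ∘ₗ s m i := by
  have hrot : s m 0 ∘ₗ τ (m + 1) ^ i = (τ m ^ i) ∘ₗ s m i := by
    simpa only [zero_add] using codegeneracy_comp_rotation_pow hτσ ((zero_add i).trans_le hi)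
  calc extraCodegeneracy s τ m ∘ₗ τ (m + 1) ^ (i + 1)
      = (s m m ∘ₗ τ (m + 1) ^ 2) ∘ₗ τ (m + 1) ^ i := by rw [pow_succ', pow_two]; rfl
    _ = τ m ∘ₗ s m 0 ∘ₗ τ (m + 1) ^ i := by rw [← hτσ₀, LinearMap.comp_assoc]
    _ = (τ m ^ (i + 1)) ∘ₗ s m i := by rw [hrot, pow_succ']; rfl

theorem codegeneracy_comp_extraCodegeneracy {k : ℕ}
    (hσσ : ∀ i j, i ≤ j → j ≤ k → s k j ∘ₗ s (k + 1) i = s k i ∘ₗ s (k + 1) (j + 1))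
    (hτσ : ∀ i, i ≤ k → τ (k + 1) ∘ₗ s (k + 1) (i + 1) = s (k + 1) i ∘ₗ τ (k + 2))
    {i : ℕ} (hi : i ≤ k) :
    s k i ∘ₗ extraCodegeneracy s τ (k + 1) = extraCodegeneracy s τ k ∘ₗ s (k + 1) (i + 1) :=
  calc s k i ∘ₗ extraCodegeneracy s τ (k + 1)
      = (s k i ∘ₗ s (k + 1) (k + 1)) ∘ₗ τ (k + 2) := rfl
    _ = s k k ∘ₗ s (k + 1) i ∘ₗ τ (k + 2) := by rw [← hσσ i k hi le_rfl, LinearMap.comp_assoc]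
    _ = extraCodegeneracy s τ k ∘ₗ s (k + 1) (i + 1) := by rw [← hτσ i hi]; rfl

theorem extraCodegeneracy_comp_extraCodegeneracy {k : ℕ}
    (hσσ : s k k ∘ₗ s (k + 1) k = s k k ∘ₗ s (k + 1) (k + 1))
    (hτσ₀ : τ (k + 1) ∘ₗ s (k + 1) 0 = s (k + 1) (k + 1) ∘ₗ τ (k + 2) ^ 2)
    (hτσ : τ (k + 1) ∘ₗ s (k + 1) (k + 1) = s (k + 1) k ∘ₗ τ (k + 2)) :
    extraCodegeneracy s τ k ∘ₗ extraCodegeneracy s τ (k + 1) =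
      extraCodegeneracy s τ k ∘ₗ s (k + 1) 0 :=
  calc extraCodegeneracy s τ k ∘ₗ extraCodegeneracy s τ (k + 1)
      = s k k ∘ₗ (τ (k + 1) ∘ₗ s (k + 1) (k + 1)) ∘ₗ τ (k + 2) := rfl
    _ = (s k k ∘ₗ s (k + 1) k) ∘ₗ τ (k + 2) ^ 2 := by rw [hτσ, pow_two]; rfl
    _ = s k k ∘ₗ τ (k + 1) ∘ₗ s (k + 1) 0 := by rw [hσσ, LinearMap.comp_assoc, hτσ₀]
    _ = extraCodegeneracy s τ k ∘ₗ s (k + 1) 0 := rfl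

theorem extraCodegeneracy_comp_rotation_pow_comp_extraCodegeneracy {k : ℕ}
    (hσσ : ∀ i j, i ≤ j → j ≤ k → s k j ∘ₗ s (k + 1) i = s k i ∘ₗ s (k + 1) (j + 1))
    (hτσ₀ : ∀ m, τ m ∘ₗ s m 0 = s m m ∘ₗ τ (m + 1) ^ 2)
    (hτσ : ∀ m i, i + 1 ≤ m → τ m ∘ₗ s m (i + 1) = s m i ∘ₗ τ (m + 1))
    {i : ℕ} (hi : i ≤ k + 1) :
    extraCodegeneracy s τ k ∘ₗ (τ (k + 1) ^ i) ∘ₗ extraCodegeneracy s τ (k + 1) =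
      (τ k ^ i) ∘ₗ extraCodegeneracy s τ k ∘ₗ s (k + 1) i := by
  cases i with
  | zero =>
    exact extraCodegeneracy_comp_extraCodegeneracy (hσσ k k le_rfl le_rfl) (hτσ₀ (k + 1))
      (hτσ (k + 1) k le_rfl)
  | succ i =>
    have hik : i ≤ k := Nat.le_of_succ_le_succ hi
    rw [← LinearMap.comp_assoc, extraCodegeneracy_comp_rotation_pow_succ (hτσ₀ k) (hτσ k) hik,
      LinearMap.comp_assoc, codegeneracy_comp_extraCodegeneracy hσσ
        (fun i hi ↦ hτσ (k + 1) i (Nat.succ_le_succ hi)) hik]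

theorem bvOperator_eq_sum_rotation_pow_comp_extraCodegeneracy {m : ℕ}
    (hτσ : ∀ i, i + 1 ≤ m → τ m ∘ₗ s m (i + 1) = s m i ∘ₗ τ (m + 1)) :
    bvOperator C s τ m =
      ∑ i ∈ Finset.range (m + 1),
        (-1 : ℤ) ^ (m * i) • (τ m ^ i) ∘ₗ extraCodegeneracy s τ m := by
  rw [bvOperator, ← Finset.Ico_add_one_right_eq_Icc, Finset.sum_Ico_eq_sum_range,
    Nat.add_sub_cancel]
  refine Finset.sum_congr rfl fun i hi ↦ ?_
  have him : i ≤ m := Nat.lt_succ_iff.mp (Finset.mem_range.mp hi)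
  have hrot : s m (m - i) ∘ₗ τ (m + 1) ^ i = (τ m ^ i) ∘ₗ s m m := by
    simpa only [Nat.sub_add_cancel him] using
      codegeneracy_comp_rotation_pow hτσ (Nat.sub_add_cancel him).le
  rw [Nat.add_sub_cancel_left, show m + 1 - (1 + i) = m - i by omega, add_comm 1 i, pow_succ,
    Module.End.mul_eq_comp, ← LinearMap.comp_assoc, hrot]
  rfl

theorem extraCodegeneracy_bvOperator_eq_zero {k : ℕ}
    (hσσ : ∀ i j, i ≤ j → j ≤ k → s k j ∘ₗ s (k + 1) i = s k i ∘ₗ s (k + 1) (j + 1))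
    (hτσ₀ : ∀ m, τ m ∘ₗ s m 0 = s m m ∘ₗ τ (m + 1) ^ 2)
    (hτσ : ∀ m i, i + 1 ≤ m → τ m ∘ₗ s m (i + 1) = s m i ∘ₗ τ (m + 1))
    {x : C (k + 2)} (hx : x ∈ normalizedSubmodule C s (k + 2)) :
    extraCodegeneracy s τ k (bvOperator C s τ (k + 1) x) = 0 := by
  rw [bvOperator_eq_sum_rotation_pow_comp_extraCodegeneracy (hτσ (k + 1)), LinearMap.sum_apply,
    map_sum]
  refine Finset.sum_eq_zero fun i hi ↦ ?_
  have hik : i ≤ k + 1 := Nat.lt_succ_iff.mp (Finset.mem_range.mp hi)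
  have hterm := LinearMap.congr_fun
    (extraCodegeneracy_comp_rotation_pow_comp_extraCodegeneracy hσσ hτσ₀ hτσ hik) x
  simp only [LinearMap.comp_apply, mem_normalizedSubmodule_succ.mp hx i hik, map_zero] at hterm
  rw [LinearMap.smul_apply, map_zsmul, LinearMap.comp_apply, hterm, smul_zero]

theorem bvOperator_sq_mem_degenerate_general
    (hσσ : ∀ m i j : ℕ, i ≤ j → j ≤ m →
      s m j ∘ₗ s (m + 1) i = s m i ∘ₗ s (m + 1) (j + 1))
    (hτσ₀ : ∀ k : ℕ, τ k ∘ₗ s k 0 = s k k ∘ₗ τ (k + 1) ^ 2)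
    (hτσ : ∀ k i : ℕ, i + 1 ≤ k → τ k ∘ₗ s k (i + 1) = s k i ∘ₗ τ (k + 1))
    (k : ℕ) {x : C (k + 2)} (hx : x ∈ normalizedSubmodule C s (k + 2)) :
    bvOperator C s τ k (bvOperator C s τ (k + 1) x) = 0 := by
  rw [bvOperator_eq_sum_rotation_pow_comp_extraCodegeneracy (hτσ k)]
  simp only [LinearMap.sum_apply, LinearMap.smul_apply, LinearMap.comp_apply,
    extraCodegeneracy_bvOperator_eq_zero (hσσ k) hτσ₀ hτσ hx, map_zero, smul_zero,
    Finset.sum_const_zero]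

end BVOperator

/-- **Lemma (strict `S¹`-complex)** (Section 3.2 of the paper).  For a cocyclic system of
`R`-modules `(C(k), δ, σ, τ)`, the square of the chain-level BV operator maps normalized
elements into degenerate ones: for every `k` and every `x ∈ N(k+2)`, the element
`Δ_k (Δ_{k+1} x)` lies in `D(k)`.  (Thus `δ_cyc² = 0` on the complex of non-degenerate chains.)

Here `d m i : C(m) → C(m+1)` is the coface map `δ_{m+1,i}` (meaningful for `i ≤ m+1`),
`s m i : C(m+1) → C(m)` is the codegeneracy map `σ_{m,i}` (meaningful for `i ≤ m`), and
`τ k : C(k) → C(k)` is the cocyclic operator, with the cosimplicial and cocyclic identities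
imposed in exactly the corresponding ranges. -/
theorem bvOperator_sq_mem_degenerate
    (d : ∀ k : ℕ, ℕ → (C k →ₗ[R] C (k + 1)))
    (s : ∀ k : ℕ, ℕ → (C (k + 1) →ₗ[R] C k))
    (τ : ∀ k : ℕ, Module.End R (C k))
    (hδδ : ∀ m i j : ℕ, i ≤ j → j + 1 ≤ m + 2 →
      (d (m + 1) (j + 1)).comp (d m i) = (d (m + 1) i).comp (d m j))
    (hσσ : ∀ m i j : ℕ, i ≤ j → j ≤ m →
      (s m j).comp (s (m + 1) i) = (s m i).comp (s (m + 1) (j + 1)))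
    (hσδ_lt : ∀ m i j : ℕ, i ≤ j → j ≤ m →
      (s (m + 1) (j + 1)).comp (d (m + 1) i) = (d m i).comp (s m j))
    (hσδ_eq₁ : ∀ k j : ℕ, j ≤ k → (s k j).comp (d k j) = LinearMap.id)
    (hσδ_eq₂ : ∀ k j : ℕ, j ≤ k → (s k j).comp (d k (j + 1)) = LinearMap.id)
    (hσδ_gt : ∀ m i j : ℕ, j ≤ i → i ≤ m →
      (s (m + 1) j).comp (d (m + 1) (i + 2)) = (d m (i + 1)).comp (s m j))
    (hτpow : ∀ k : ℕ, τ k ^ (k + 1) = 1)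
    (hτδ₀ : ∀ m : ℕ, (τ (m + 1)).comp (d m 0) = d m (m + 1))
    (hτδ : ∀ m i : ℕ, i ≤ m → (τ (m + 1)).comp (d m (i + 1)) = (d m i).comp (τ m))
    (hτσ₀ : ∀ k : ℕ, (τ k).comp (s k 0) = (s k k).comp (τ (k + 1) ^ 2))
    (hτσ : ∀ k i : ℕ, i + 1 ≤ k → (τ k).comp (s k (i + 1)) = (s k i).comp (τ (k + 1))) :
    ∀ k : ℕ, ∀ x : C (k + 2), x ∈ normalizedSubmodule C s (k + 2) →
      bvOperator C s τ k (bvOperator C s τ (k + 1) x) ∈ degenerateSubmodule C d k := by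
  intro k x hx
  rw [bvOperator_sq_mem_degenerate_general hσσ hτσ₀ hτσ k hx]
  exact zero_mem _
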